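/- Let n ≤ 4, m ≥ 1, and let Γ be a metric-compatible (0,1)-soliton on the trivial bundle ℝⁿ × ℝᵐ with polynomial curvature growth to order two. Then Γ is flat, i.e. F_{ij}(x) = 0 for all indices i, j and all x ∈ ℝⁿ. -/

import Mathlib

open MeasureTheory Real Filter Matrix
open scoped ENNReal

noncomputable section

namespace YM

variable {n m : ℕ}

/-- A connection on the trivial bundle `ℝⁿ × ℝᵐ`, given by its coefficient
matrices `Γ₁(x), …, Γₙ(x)`. -/
abbrev Conn (n m : ℕ) :=
  (Fin n → ℝ) → Fin n → Matrix (Fin m) (Fin m) ℝ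

/-- Entrywise `i`-th partial derivative of a matrix-valued map on `ℝⁿ`. -/
def pder (i : Fin n) (A : (Fin n → ℝ) → Matrix (Fin m) (Fin m) ℝ)
    (x : Fin n → ℝ) : Matrix (Fin m) (Fin m) ℝ :=
  Matrix.of fun a b => fderiv ℝ (fun y => A y a b) x (Pi.single i 1)

/-- Smoothness (entrywise) of a matrix-valued map on `ℝⁿ`. -/
def SmoothMat (A : (Fin n → ℝ) → Matrix (Fin m) (Fin m) ℝ) : Prop :=
  ∀ a b, ContDiff ℝ (⊤ : ℕ∞) fun y => A y a b

/-- Smoothness of a connection. -/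
def Smooth (Γ : Conn n m) : Prop :=
  ∀ i, SmoothMat fun x => Γ x i

/-- Matrix commutator. -/
def comm (A B : Matrix (Fin m) (Fin m) ℝ) : Matrix (Fin m) (Fin m) ℝ :=
  A * B - B * A

/-- Curvature `F_{ij} = ∂ᵢΓⱼ − ∂ⱼΓᵢ + [Γᵢ, Γⱼ]`. -/
def curv (Γ : Conn n m) (i j : Fin n) (x : Fin n → ℝ) :
    Matrix (Fin m) (Fin m) ℝ :=
  pder i (fun y => Γ y j) x - pder j (fun y => Γ y i) x + comm (Γ x i) (Γ x j)

/-- Covariant derivative `∇ᵢA = ∂ᵢA + [Γᵢ, A]`. -/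
def covDer (Γ : Conn n m) (i : Fin n)
    (A : (Fin n → ℝ) → Matrix (Fin m) (Fin m) ℝ) (x : Fin n → ℝ) :
    Matrix (Fin m) (Fin m) ℝ :=
  pder i A x + comm (Γ x i) (A x)

/-- `(D*F)ₖ = −Σᵢ ∇ᵢF_{ik}`. -/
def dstarF (Γ : Conn n m) (k : Fin n) (x : Fin n → ℝ) :
    Matrix (Fin m) (Fin m) ℝ :=
  - ∑ i, covDer Γ i (fun y => curv Γ i k y) x

/-- Squared Frobenius norm of a matrix. -/
def frobSq (A : Matrix (Fin m) (Fin m) ℝ) : ℝ := ∑ a, ∑ b, (A a b) ^ 2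

/-- Frobenius norm of a matrix. -/
def frobNorm (A : Matrix (Fin m) (Fin m) ℝ) : ℝ := Real.sqrt (frobSq A)

/-- Frobenius inner product `⟨A, B⟩ = tr(A Bᵀ)`. -/
def frobInner (A B : Matrix (Fin m) (Fin m) ℝ) : ℝ := ∑ a, ∑ b, A a b * B a b

/-- `|F(x)|² = Σ_{i,j} ‖F_{ij}(x)‖²` (Frobenius norms). -/
def normSqF (Γ : Conn n m) (x : Fin n → ℝ) : ℝ :=
  ∑ i, ∑ j, frobSq (curv Γ i j x)

/-- `|F(x)|`. -/
def normF (Γ : Conn n m) (x : Fin n → ℝ) : ℝ := Real.sqrt (normSqF Γ x)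

/-- Euclidean norm on `ℝⁿ`. -/
def enorm (x : Fin n → ℝ) : ℝ := Real.sqrt (∑ i, x i ^ 2)

/-- Metric compatibility: all coefficient matrices are skew-symmetric. -/
def MetricCompat (Γ : Conn n m) : Prop :=
  ∀ x i, (Γ x i)ᵀ = -(Γ x i)

/-- `(x₀,t₀)`-soliton: `Σᵢ ∇ᵢF_{ik} = (1/(2t₀)) Σᵢ (x−x₀)ᵢ F_{ik}`. -/
def IsSolitonAt (Γ : Conn n m) (x₀ : Fin n → ℝ) (t₀ : ℝ) : Prop :=
  ∀ (x : Fin n → ℝ) (k : Fin n),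
    ∑ i, covDer Γ i (fun y => curv Γ i k y) x
      = (1 / (2 * t₀)) • ∑ i, (x i - x₀ i) • curv Γ i k x

/-- `(0,1)`-soliton. -/
def IsSoliton (Γ : Conn n m) : Prop := IsSolitonAt Γ 0 1

/-- The `ℱ`-functional
`ℱ_{x₀,t₀}(Γ) = t₀² (4πt₀)^{−n/2} ∫ |F|² e^{−|x−x₀|²/(4t₀)}`. -/
def Ffunc (Γ : Conn n m) (x₀ : Fin n → ℝ) (t₀ : ℝ) : ℝ :=
  t₀ ^ 2 * (4 * π * t₀) ^ (-(n : ℝ) / 2) *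
    ∫ x : Fin n → ℝ,
      normSqF Γ x * Real.exp (-(∑ i, (x i - x₀ i) ^ 2) / (4 * t₀))

/-- The entropy `λ(Γ) = sup_{x₀, t₀>0} ℱ_{x₀,t₀}(Γ)`, valued in `[0,∞]`. -/
def entropy (Γ : Conn n m) : ℝ≥0∞ :=
  ⨆ (x₀ : Fin n → ℝ) (t₀ : ℝ) (_ : 0 < t₀), ENNReal.ofReal (Ffunc Γ x₀ t₀)

/-- Polynomial curvature growth: `|F(x)| ≤ p(|x|)`. -/
def PolyCurvGrowth (Γ : Conn n m) : Prop :=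
  ∃ p : Polynomial ℝ, ∀ x, normF Γ x ≤ p.eval (enorm x)

/-- Polynomial curvature growth to order two. -/
def PolyCurvGrowth2 (Γ : Conn n m) : Prop :=
  ∃ p : Polynomial ℝ, ∀ x,
    normF Γ x
      + (∑ i, ∑ j, ∑ k, frobNorm (covDer Γ i (fun y => curv Γ j k y) x))
      + (∑ i, ∑ j, ∑ k, ∑ l,
          frobNorm (covDer Γ i
            (fun y => covDer Γ j (fun z => curv Γ k l z) y) x))
      ≤ p.eval (enorm x)

/-- Cylindrical: some nonzero constant vector `V` satisfies `V ⌟ F ≡ 0`. -/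
def Cylindrical (Γ : Conn n m) : Prop :=
  ∃ V : Fin n → ℝ, V ≠ 0 ∧
    ∀ (x : Fin n → ℝ) (k : Fin n), ∑ i, V i • curv Γ i k x = 0

/-- `(DB)_{ij} = ∇ᵢBⱼ − ∇ⱼBᵢ`. -/
def Dop (Γ B : Conn n m) (i j : Fin n) (x : Fin n → ℝ) :
    Matrix (Fin m) (Fin m) ℝ :=
  covDer Γ i (fun y => B y j) x - covDer Γ j (fun y => B y i) x

/-- The second variation operator
`(L_{x₀,t₀}B)ₖ = −Σᵢ∇ᵢ(DB)_{ik} + (1/(2t₀))Σᵢ(x−x₀)ᵢ(DB)_{ik} + Σᵢ[Bᵢ,F_{ik}]`. -/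
def Lop (Γ B : Conn n m) (x₀ : Fin n → ℝ) (t₀ : ℝ) (k : Fin n)
    (x : Fin n → ℝ) : Matrix (Fin m) (Fin m) ℝ :=
  (- ∑ i, covDer Γ i (fun y => Dop Γ B i k y) x)
    + (1 / (2 * t₀)) • ∑ i, (x i - x₀ i) • Dop Γ B i k x
    + ∑ i, comm (B x i) (curv Γ i k x)

/-- The Gaussian weight `G(x) = (4π)^{−n/2} e^{−|x|²/4}`. -/
def gaussG (n : ℕ) (x : Fin n → ℝ) : ℝ :=
  (4 * π) ^ (-(n : ℝ) / 2) * Real.exp (-(∑ i, x i ^ 2) / 4)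

/-- The second variation form `Q(σ,V,B)` of a `(0,1)`-soliton. -/
def Q (Γ : Conn n m) (σ : ℝ) (V : Fin n → ℝ) (B : Conn n m) : ℝ :=
  -4 * σ ^ 2 * (∫ x : Fin n → ℝ, (∑ k, frobSq (dstarF Γ k x)) * gaussG n x)
    - 2 * (∫ x : Fin n → ℝ,
        (∑ k, frobSq (∑ i, V i • curv Γ i k x)) * gaussG n x)
    + 4 * (∫ x : Fin n → ℝ,
        (∑ k, frobInner (B x k) (Lop Γ B 0 1 k x)) * gaussG n x)
    - 4 * (∫ x : Fin n → ℝ,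
        (∑ k, frobInner (B x k)
          (∑ i, (σ * x i + V i) • curv Γ i k x)) * gaussG n x)

/-- Skew-symmetric-matrix-valued 1-form. -/
def SkewVals (B : Conn n m) : Prop := ∀ x i, (B x i)ᵀ = -(B x i)

/-- `ℱ`-instability. -/
def FUnstable (Γ : Conn n m) : Prop :=
  ∃ B : Conn n m, Smooth B ∧ HasCompactSupport B ∧ SkewVals B ∧
    ∀ (σ : ℝ) (V : Fin n → ℝ), Q Γ σ V B < 0

/-- Joint smoothness (entrywise) of a one-parameter family of connections on a
time set `S`. -/
def SmoothFamilyOn (Γt : ℝ → Conn n m) (S : Set ℝ) : Prop :=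
  ∀ (k : Fin n) (a b : Fin m),
    ContDiffOn ℝ (⊤ : ℕ∞) (fun p : ℝ × (Fin n → ℝ) => Γt p.1 p.2 k a b)
      (S ×ˢ (Set.univ : Set (Fin n → ℝ)))

/-- Yang–Mills flow: `∂ₜ(Γ_t)ₖ = Σᵢ ∇ᵢ(F_t)_{ik}` on a time set `S`. -/
def YMFlowOn (Γt : ℝ → Conn n m) (S : Set ℝ) : Prop :=
  ∀ t ∈ S, ∀ (x : Fin n → ℝ) (k : Fin n) (a b : Fin m),
    HasDerivWithinAt (fun t' => Γt t' x k a b)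
      ((∑ i, covDer (Γt t) i (fun y => curv (Γt t) i k y) x) a b) S t

/-- Locally uniform in time polynomial curvature growth to order two. -/
def PolyCurvGrowth2On (Γt : ℝ → Conn n m) (S : Set ℝ) : Prop :=
  ∀ J : Set ℝ, IsCompact J → J ⊆ S →
    ∃ p : Polynomial ℝ, ∀ t ∈ J, ∀ x,
      normF (Γt t) x
        + (∑ i, ∑ j, ∑ k,
            frobNorm (covDer (Γt t) i (fun y => curv (Γt t) j k y) x))
        + (∑ i, ∑ j, ∑ k, ∑ l,
            frobNorm (covDer (Γt t) i
              (fun y => covDer (Γt t) j (fun z => curv (Γt t) k l z) y) x))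
        ≤ p.eval (enorm x)

end YM

/-!
The stress-energy tensor `S_{ij} = ∑ₖ ⟨F_{ik}, F_{jk}⟩ - δ_{ij} |F|² / 4` has trace
`(4 - n) / 4 * |F|²`, and the Bianchi identity gives `∑ᵢ ∂ᵢ S_{ij} = -∑ₖ ⟨(D*F)ₖ, F_{jk}⟩`. Contract
it with the radial field `x - x₀` to a vector field `Y`, and weight it by the Gaussian
`G = exp (-|x - x₀|² / (4 t₀))`. For a soliton the terms of `div (G Y)` containing
`S(x - x₀, x - x₀)` cancel, leaving
`div (G Y) = ((4 - n) / 4 + |x - x₀|² / (8 t₀)) |F|² G`, which is nonnegative when `n ≤ 4`.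
Since `|G Y| ≤ C |x - x₀| |F|² G` with `|F|² G` integrable, integrating against dilated cutoffs
forces `div (G Y) = 0`. So `F` vanishes away from `x₀`, hence everywhere by continuity.
-/

namespace YM

open Topology

variable {n m : ℕ}

section Divergence

variable {E : Type*} [NormedAddCommGroup E] [NormedSpace ℝ E]

theorem hasCompactSupport_comp_inv_smul_sub {φ : E → ℝ} (hφ : HasCompactSupport φ) (c : E) {R : ℝ}
    (hR : R ≠ 0) : HasCompactSupport fun x => φ (R⁻¹ • (x - c)) :=
  hφ.comp_homeomorph ((Homeomorph.subRight c).trans (Homeomorph.smulOfNeZero R⁻¹ (inv_ne_zero hR)))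

-- The derivative of the cutoff is `O(1/R)` and lives where `‖x - c‖ ∼ R`, so it absorbs the factor
-- `‖x - c‖` in the bound on `X`.
theorem tendsto_integral_fderiv_dilation_zero [MeasurableSpace E] [OpensMeasurableSpace E]
    {μ : Measure E} {φ : E → ℝ} (hφ : ContDiff ℝ 1 φ) (hφc : HasCompactSupport φ) {X : E → E}
    (hX : Continuous X) {c : E} {ρ : E → ℝ} (hρ : Integrable ρ μ)
    (hXρ : ∀ x, ‖X x‖ ≤ ‖x - c‖ * ρ x) :
    Tendsto (fun R : ℝ => ∫ x, fderiv ℝ (fun y => φ (R⁻¹ • (y - c))) x (X x) ∂μ) atTop (𝓝 0) := by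
  have hfderiv (R : ℝ) (x : E) :
      fderiv ℝ (fun y => φ (R⁻¹ • (y - c))) x = R⁻¹ • fderiv ℝ φ (R⁻¹ • (x - c)) := by
    rw [fderiv_comp_sub (f := fun y => φ (R⁻¹ • y)), fderiv_comp_smul]
  have hφ' : Continuous (fderiv ℝ φ) := hφ.continuous_fderiv one_ne_zero
  have hle (R : ℝ) (x : E) : ‖fderiv ℝ (fun y => φ (R⁻¹ • (y - c))) x (X x)‖ ≤
      ‖R⁻¹ • (x - c)‖ * ‖fderiv ℝ φ (R⁻¹ • (x - c))‖ * ‖ρ x‖ := by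
    rw [hfderiv]
    calc ‖R⁻¹ • fderiv ℝ φ (R⁻¹ • (x - c)) (X x)‖
        ≤ ‖R⁻¹‖ * (‖fderiv ℝ φ (R⁻¹ • (x - c))‖ * ‖X x‖) := by
          rw [norm_smul]; gcongr; exact ContinuousLinearMap.le_opNorm _ _
      _ ≤ ‖R⁻¹‖ * (‖fderiv ℝ φ (R⁻¹ • (x - c))‖ * (‖x - c‖ * ‖ρ x‖)) := by
          gcongr; exact (hXρ x).trans (by gcongr; exact Real.le_norm_self _)
      _ = _ := by rw [norm_smul]; ring
  obtain ⟨C, hC⟩ : ∃ C, ∀ y : E, ‖‖y‖ * ‖fderiv ℝ φ y‖‖ ≤ C :=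
    ((hφc.fderiv ℝ).norm.mul_left).exists_bound_of_continuous (continuous_norm.mul hφ'.norm)
  rw [← integral_zero E ℝ (μ := μ)]
  refine tendsto_integral_filter_of_dominated_convergence (fun x => C * ‖ρ x‖) ?_ ?_
    (hρ.norm.const_mul C) (ae_of_all _ fun x => ?_)
  · refine .of_forall fun R => Continuous.aestronglyMeasurable ?_
    simp only [hfderiv]
    fun_prop
  · refine .of_forall fun R => ae_of_all _ fun x => (hle R x).trans ?_
    gcongr
    exact (Real.le_norm_self _).trans (hC _)
  · refine squeeze_zero_norm (hle · x) ?_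
    have hdil : Tendsto (fun R : ℝ => R⁻¹ • (x - c)) atTop (𝓝 0) := by
      simpa using (tendsto_inv_atTop_zero (𝕜 := ℝ)).smul_const (x - c)
    simpa using (hdil.norm.mul (hφ'.norm.continuousAt.tendsto.comp hdil)).mul_const ‖ρ x‖

variable {ι : Type*} [Fintype ι] [DecidableEq ι]

/-- The divergence `∑ᵢ ∂ᵢXᵢ` of a vector field on `ℝ^ι`. As for `fderiv`, a component that is not
differentiable at `x` contributes `0`. -/
def divergence (X : (ι → ℝ) → ι → ℝ) (x : ι → ℝ) : ℝ :=
  ∑ i, fderiv ℝ (fun y => X y i) x (Pi.single i 1)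

theorem fderiv_apply_eq_sum_single (f : (ι → ℝ) → ℝ) (x v : ι → ℝ) :
    fderiv ℝ f x v = ∑ i, v i * fderiv ℝ f x (Pi.single i 1) := by
  conv_lhs => rw [pi_eq_sum_univ' v, map_sum]
  simp only [map_smul, smul_eq_mul]

theorem divergence_smul {g : (ι → ℝ) → ℝ} {X : (ι → ℝ) → ι → ℝ} {x : ι → ℝ}
    (hg : DifferentiableAt ℝ g x) (hX : ∀ i, DifferentiableAt ℝ (fun y => X y i) x) :
    divergence (fun y => g y • X y) x = g x * divergence X x + fderiv ℝ g x (X x) := by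
  simp only [divergence, fderiv_apply_eq_sum_single g x (X x), Finset.mul_sum,
    ← Finset.sum_add_distrib, Pi.smul_apply, smul_eq_mul]
  refine Finset.sum_congr rfl fun i _ => ?_
  rw [fderiv_fun_mul hg (hX i)]
  simp

theorem continuous_divergence {X : (ι → ℝ) → ι → ℝ} (hX : ContDiff ℝ 1 X) :
    Continuous (divergence X) :=
  continuous_finsetSum _ fun i _ =>
    ((contDiff_pi.1 hX i).continuous_fderiv one_ne_zero).clm_apply continuous_const

theorem integral_mul_divergence {φ : (ι → ℝ) → ℝ} (hφ : ContDiff ℝ 1 φ)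
    (hφc : HasCompactSupport φ) {X : (ι → ℝ) → ι → ℝ} (hX : ContDiff ℝ 1 X) :
    ∫ x, φ x * divergence X x = -∫ x, fderiv ℝ φ x (X x) := by
  have hXi (i : ι) : ContDiff ℝ 1 fun y => X y i := contDiff_pi.1 hX i
  have hφ' (i : ι) : Continuous fun x => fderiv ℝ φ x (Pi.single i 1) :=
    (hφ.continuous_fderiv one_ne_zero).clm_apply continuous_const
  have hX' (i : ι) : Continuous fun x => fderiv ℝ (fun y => X y i) x (Pi.single i 1) :=
    ((hXi i).continuous_fderiv one_ne_zero).clm_apply continuous_const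
  have hint_left (i : ι) : Integrable fun x => fderiv ℝ φ x (Pi.single i 1) * X x i :=
    ((hφ' i).mul (hXi i).continuous).integrable_of_hasCompactSupport
      (hφc.fderiv_apply ℝ (Pi.single i 1)).mul_right
  have hint_right (i : ι) :
      Integrable fun x => φ x * fderiv ℝ (fun y => X y i) x (Pi.single i 1) :=
    (hφ.continuous.mul (hX' i)).integrable_of_hasCompactSupport hφc.mul_right
  simp only [divergence, Finset.mul_sum, fderiv_apply_eq_sum_single φ _ (X _), mul_comm (X _ _)]
  rw [integral_finsetSum _ fun i _ => hint_right i, integral_finsetSum _ fun i _ => hint_left i,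
    ← Finset.sum_neg_distrib]
  exact Finset.sum_congr rfl fun i _ =>
    integral_mul_fderiv_eq_neg_fderiv_mul_of_integrable (hint_left i) (hint_right i)
      ((hφ.continuous.mul (hXi i).continuous).integrable_of_hasCompactSupport hφc.mul_right)
      (fun x _ => hφ.differentiable one_ne_zero x)
      (fun x _ => (hXi i).differentiable one_ne_zero x)

theorem tendsto_integral_dilation_mul_divergence_zero {φ : (ι → ℝ) → ℝ} (hφ : ContDiff ℝ 1 φ)
    (hφc : HasCompactSupport φ) {X : (ι → ℝ) → ι → ℝ} (hX : ContDiff ℝ 1 X) {c : ι → ℝ}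
    {ρ : (ι → ℝ) → ℝ} (hρ : Integrable ρ) (hXρ : ∀ x, ‖X x‖ ≤ ‖x - c‖ * ρ x) :
    Tendsto (fun R : ℝ => ∫ x, φ (R⁻¹ • (x - c)) * divergence X x) atTop (𝓝 0) := by
  have hlim := (tendsto_integral_fderiv_dilation_zero hφ hφc hX.continuous hρ hXρ).neg
  rw [neg_zero] at hlim
  refine hlim.congr' ?_
  filter_upwards [eventually_ne_atTop 0] with R hR
  exact (integral_mul_divergence (by fun_prop)
    (hasCompactSupport_comp_inv_smul_sub hφc c hR) hX).symm

theorem divergence_eq_zero_of_nonneg {X : (ι → ℝ) → ι → ℝ} (hX : ContDiff ℝ 1 X)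
    (hdiv : 0 ≤ divergence X) {c : ι → ℝ} {ρ : (ι → ℝ) → ℝ} (hρ : Integrable ρ)
    (hXρ : ∀ x, ‖X x‖ ≤ ‖x - c‖ * ρ x) : divergence X = 0 := by
  have hdiv_cont := continuous_divergence hX
  let φ : ContDiffBump (0 : ι → ℝ) := ⟨1, 2, one_pos, one_lt_two⟩
  have hlim := tendsto_integral_dilation_mul_divergence_zero φ.contDiff φ.hasCompactSupport hX
    hρ hXρ
  funext x₀
  by_contra hx₀
  let ψ : ContDiffBump x₀ := ⟨1, 2, one_pos, one_lt_two⟩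
  have hψdiv : Continuous fun x => ψ x * divergence X x := ψ.continuous.mul hdiv_cont
  have hψ_pos : 0 < ∫ x, ψ x * divergence X x := by
    refine hψdiv.integral_pos_of_hasCompactSupport_nonneg_nonzero (x := x₀)
      ψ.hasCompactSupport.mul_right (fun x => mul_nonneg ψ.nonneg (hdiv x)) ?_
    simpa [ψ.one_of_mem_closedBall (Metric.mem_closedBall_self ψ.rIn_pos.le)] using hx₀
  refine hψ_pos.not_ge (ge_of_tendsto hlim ?_)
  filter_upwards [eventually_gt_atTop 0, eventually_ge_atTop (2 + dist x₀ c)] with R hR hRψ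
  have hφdiv : Continuous fun x => φ (R⁻¹ • (x - c)) * divergence X x :=
    (φ.continuous.comp (by fun_prop)).mul hdiv_cont
  refine integral_mono (hψdiv.integrable_of_hasCompactSupport ψ.hasCompactSupport.mul_right)
    (hφdiv.integrable_of_hasCompactSupport
      (hasCompactSupport_comp_inv_smul_sub φ.hasCompactSupport c hR.ne').mul_right)
    fun x => mul_le_mul_of_nonneg_right ?_ (hdiv x)
  obtain hx | hx := lt_or_ge (dist x x₀) 2
  · rw [φ.one_of_mem_closedBall]
    · exact ψ.le_one
    rw [mem_closedBall_zero_iff, norm_smul, norm_inv, Real.norm_of_nonneg hR.le,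
      inv_mul_le_iff₀ hR, mul_one, ← dist_eq_norm]
    linarith [dist_triangle x x₀ c]
  · rw [ψ.zero_of_le_dist hx]
    exact φ.nonneg

end Divergence

section MatrixCalculus

variable {A B : (Fin n → ℝ) → Matrix (Fin m) (Fin m) ℝ}

theorem SmoothMat.differentiableAt (hA : SmoothMat A) (a b : Fin m) (x : Fin n → ℝ) :
    DifferentiableAt ℝ (fun y => A y a b) x :=
  (hA a b).differentiable (by simp) x

theorem SmoothMat.pder (hA : SmoothMat A) (i : Fin n) : SmoothMat (pder i A) := fun a b =>
  ((hA a b).fderiv_right (m := (⊤ : ℕ∞)) (by simp)).clm_apply contDiff_const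

theorem SmoothMat.add (hA : SmoothMat A) (hB : SmoothMat B) : SmoothMat fun x => A x + B x :=
  fun a b => (hA a b).add (hB a b)

theorem SmoothMat.sub (hA : SmoothMat A) (hB : SmoothMat B) : SmoothMat fun x => A x - B x :=
  fun a b => (hA a b).sub (hB a b)

theorem SmoothMat.mul (hA : SmoothMat A) (hB : SmoothMat B) : SmoothMat fun x => A x * B x := by
  intro a b
  simp only [Matrix.mul_apply]
  exact ContDiff.sum fun c _ => (hA a c).mul (hB c b)

theorem SmoothMat.comm (hA : SmoothMat A) (hB : SmoothMat B) :
    SmoothMat fun x => comm (A x) (B x) :=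
  (hA.mul hB).sub (hB.mul hA)

theorem pder_neg (A : (Fin n → ℝ) → Matrix (Fin m) (Fin m) ℝ) (i : Fin n) (x : Fin n → ℝ) :
    pder i (fun y => -A y) x = -pder i A x := by
  ext a b
  simp [pder]

theorem pder_add (hA : SmoothMat A) (hB : SmoothMat B) (i : Fin n) (x : Fin n → ℝ) :
    pder i (fun y => A y + B y) x = pder i A x + pder i B x := by
  ext a b
  exact DFunLike.congr_fun
    (fderiv_fun_add (hA.differentiableAt a b x) (hB.differentiableAt a b x)) _

theorem pder_sub (hA : SmoothMat A) (hB : SmoothMat B) (i : Fin n) (x : Fin n → ℝ) :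
    pder i (fun y => A y - B y) x = pder i A x - pder i B x := by
  ext a b
  exact DFunLike.congr_fun
    (fderiv_fun_sub (hA.differentiableAt a b x) (hB.differentiableAt a b x)) _

theorem pder_mul (hA : SmoothMat A) (hB : SmoothMat B) (i : Fin n) (x : Fin n → ℝ) :
    pder i (fun y => A y * B y) x = pder i A x * B x + A x * pder i B x := by
  ext a b
  have hderiv : HasFDerivAt (fun y => ∑ c, A y a c * B y c b) _ x :=
    HasFDerivAt.fun_sum (u := Finset.univ) fun c _ =>
      (hA.differentiableAt a c x).hasFDerivAt.mul (hB.differentiableAt c b x).hasFDerivAt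
  change fderiv ℝ (fun y => ∑ c, A y a c * B y c b) x (Pi.single i 1) = _
  rw [hderiv.fderiv, Matrix.add_apply, Matrix.mul_apply, Matrix.mul_apply,
    ← Finset.sum_add_distrib, _root_.sum_apply]
  refine Finset.sum_congr rfl fun c _ => ?_
  simp only [_root_.add_apply, _root_.smul_apply, smul_eq_mul, pder, of_apply]
  ring

theorem pder_comm (hA : SmoothMat A) (hB : SmoothMat B) (i : Fin n) (x : Fin n → ℝ) :
    pder i (fun y => comm (A y) (B y)) x = comm (pder i A x) (B x) + comm (A x) (pder i B x) := by
  simp only [comm]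
  rw [pder_sub (hA.mul hB) (hB.mul hA), pder_mul hA hB, pder_mul hB hA]
  abel

theorem pder_pder_comm (hA : SmoothMat A) (i j : Fin n) (x : Fin n → ℝ) :
    pder i (pder j A) x = pder j (pder i A) x := by
  ext a b
  have hsymm : IsSymmSndFDerivAt ℝ (fun y => A y a b) x :=
    (hA a b).contDiffAt.isSymmSndFDerivAt
      (by simpa using WithTop.coe_le_coe.2 (le_top : (2 : ℕ∞) ≤ ⊤))
  have hdiff : DifferentiableAt ℝ (fderiv ℝ (fun y => A y a b)) x :=
    ((hA a b).fderiv_right (m := (⊤ : ℕ∞)) (by simp)).differentiable (by simp) x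
  simpa [pder, fderiv_clm_apply hdiff] using hsymm _ _

end MatrixCalculus

section Curvature

variable {Γ : Conn n m}

theorem Smooth.smoothMat_curv (hsm : Smooth Γ) (i j : Fin n) : SmoothMat (curv Γ i j) :=
  (((hsm j).pder i).sub ((hsm i).pder j)).add ((hsm i).comm (hsm j))

theorem curv_antisymm (Γ : Conn n m) (i j : Fin n) (x : Fin n → ℝ) :
    curv Γ i j x = -curv Γ j i x := by
  simp only [curv, comm]
  abel

theorem covDer_curv_antisymm (Γ : Conn n m) (i j k : Fin n) (x : Fin n → ℝ) :
    covDer Γ i (curv Γ j k) x = -covDer Γ i (curv Γ k j) x := by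
  rw [show curv Γ j k = fun y => -curv Γ k j y from funext (curv_antisymm Γ j k)]
  simp only [covDer, comm, pder_neg]
  noncomm_ring

theorem pder_curv (hsm : Smooth Γ) (i j k : Fin n) (x : Fin n → ℝ) :
    pder i (curv Γ j k) x = pder i (pder j fun y => Γ y k) x - pder i (pder k fun y => Γ y j) x +
      (comm (pder i (fun y => Γ y j) x) (Γ x k) + comm (Γ x j) (pder i (fun y => Γ y k) x)) := by
  have h := pder_add (((hsm k).pder j).sub ((hsm j).pder k)) ((hsm j).comm (hsm k)) i x
  rwa [pder_sub ((hsm k).pder j) ((hsm j).pder k), pder_comm (hsm j) (hsm k)] at h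

theorem bianchi_identity (hsm : Smooth Γ) (i j k : Fin n) (x : Fin n → ℝ) :
    covDer Γ i (curv Γ j k) x + covDer Γ j (curv Γ k i) x + covDer Γ k (curv Γ i j) x = 0 := by
  simp only [covDer, pder_curv hsm]
  rw [pder_pder_comm (hsm k) j i, pder_pder_comm (hsm j) k i, pder_pder_comm (hsm i) k j]
  simp only [curv, comm]
  noncomm_ring

end Curvature

section Frobenius

theorem frobInner_comm (A B : Matrix (Fin m) (Fin m) ℝ) : frobInner A B = frobInner B A := by
  simp only [frobInner, mul_comm]

theorem frobInner_add_left (A B C : Matrix (Fin m) (Fin m) ℝ) :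
    frobInner (A + B) C = frobInner A C + frobInner B C := by
  simp only [frobInner, Matrix.add_apply, add_mul, Finset.sum_add_distrib]

theorem frobInner_add_right (A B C : Matrix (Fin m) (Fin m) ℝ) :
    frobInner A (B + C) = frobInner A B + frobInner A C := by
  simp only [frobInner_comm A, frobInner_add_left]

theorem frobInner_neg_left (A B : Matrix (Fin m) (Fin m) ℝ) :
    frobInner (-A) B = -frobInner A B := by
  simp only [frobInner, Matrix.neg_apply, neg_mul, Finset.sum_neg_distrib]

theorem frobInner_neg_neg (A B : Matrix (Fin m) (Fin m) ℝ) :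
    frobInner (-A) (-B) = frobInner A B := by
  simp only [frobInner, Matrix.neg_apply, neg_mul_neg]

theorem frobInner_smul_left (c : ℝ) (A B : Matrix (Fin m) (Fin m) ℝ) :
    frobInner (c • A) B = c * frobInner A B := by
  simp only [frobInner, Matrix.smul_apply, smul_eq_mul, mul_assoc, Finset.mul_sum]

theorem frobInner_sum_left {ι : Type*} (s : Finset ι) (A : ι → Matrix (Fin m) (Fin m) ℝ)
    (B : Matrix (Fin m) (Fin m) ℝ) :
    frobInner (∑ i ∈ s, A i) B = ∑ i ∈ s, frobInner (A i) B :=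
  map_sum (AddMonoidHom.mk' (frobInner · B) (frobInner_add_left · · B)) A s

theorem frobInner_eq_trace (A B : Matrix (Fin m) (Fin m) ℝ) :
    frobInner A B = (A * Bᵀ).trace := by
  simp [frobInner, Matrix.trace, Matrix.mul_apply]

theorem frobInner_comm_add_frobInner_comm_eq_zero {G : Matrix (Fin m) (Fin m) ℝ} (hG : Gᵀ = -G)
    (A B : Matrix (Fin m) (Fin m) ℝ) :
    frobInner (comm G A) B + frobInner A (comm G B) = 0 := by
  have hcycle : (G * (A * Bᵀ)).trace = (A * (Bᵀ * G)).trace := by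
    rw [Matrix.trace_mul_comm, Matrix.mul_assoc]
  simp only [frobInner_eq_trace, comm, Matrix.transpose_sub, Matrix.transpose_mul, hG,
    Matrix.sub_mul, Matrix.mul_sub, Matrix.trace_sub, Matrix.mul_neg, Matrix.neg_mul,
    Matrix.trace_neg, hcycle, Matrix.mul_assoc]
  ring

theorem frobInner_self (A : Matrix (Fin m) (Fin m) ℝ) : frobInner A A = frobSq A := by
  simp only [frobSq, frobInner, sq]

theorem frobSq_nonneg (A : Matrix (Fin m) (Fin m) ℝ) : 0 ≤ frobSq A := by
  unfold frobSq; positivity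

theorem frobSq_eq_zero {A : Matrix (Fin m) (Fin m) ℝ} : frobSq A = 0 ↔ A = 0 := by
  simp (disch := intros; positivity) [frobSq, Finset.sum_eq_zero_iff_of_nonneg, ← Matrix.ext_iff]

theorem abs_frobInner_le (A B : Matrix (Fin m) (Fin m) ℝ) :
    |frobInner A B| ≤ (frobSq A + frobSq B) / 2 := by
  simp only [frobInner, frobSq, ← Finset.sum_add_distrib, Finset.sum_div]
  refine (Finset.abs_sum_le_sum_abs _ _).trans (Finset.sum_le_sum fun a _ =>
    (Finset.abs_sum_le_sum_abs _ _).trans (Finset.sum_le_sum fun b _ => ?_))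
  rw [abs_mul]
  linarith [two_mul_le_add_sq |A a b| |B a b|, sq_abs (A a b), sq_abs (B a b)]

theorem contDiff_frobInner {A B : (Fin n → ℝ) → Matrix (Fin m) (Fin m) ℝ} (hA : SmoothMat A)
    (hB : SmoothMat B) : ContDiff ℝ (⊤ : ℕ∞) fun x => frobInner (A x) (B x) :=
  ContDiff.sum fun a _ => ContDiff.sum fun b _ => (hA a b).mul (hB a b)

theorem fderiv_frobInner {A B : (Fin n → ℝ) → Matrix (Fin m) (Fin m) ℝ} (hA : SmoothMat A)
    (hB : SmoothMat B) (i : Fin n) (x : Fin n → ℝ) :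
    fderiv ℝ (fun y => frobInner (A y) (B y)) x (Pi.single i 1) =
      frobInner (pder i A x) (B x) + frobInner (A x) (pder i B x) := by
  have hderiv : HasFDerivAt (fun y => ∑ a, ∑ b, A y a b * B y a b) _ x :=
    HasFDerivAt.fun_sum (u := Finset.univ) fun a _ =>
      HasFDerivAt.fun_sum (u := Finset.univ) fun b _ =>
        (hA.differentiableAt a b x).hasFDerivAt.mul (hB.differentiableAt a b x).hasFDerivAt
  change fderiv ℝ (fun y => ∑ a, ∑ b, A y a b * B y a b) x (Pi.single i 1) = _
  rw [hderiv.fderiv]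
  simp only [frobInner, pder, _root_.sum_apply, ← Finset.sum_add_distrib]
  refine Finset.sum_congr rfl fun a _ => Finset.sum_congr rfl fun b _ => ?_
  simp only [_root_.add_apply, _root_.smul_apply, smul_eq_mul, of_apply]
  ring

theorem MetricCompat.fderiv_frobInner {Γ : Conn n m} (hmc : MetricCompat Γ)
    {A B : (Fin n → ℝ) → Matrix (Fin m) (Fin m) ℝ} (hA : SmoothMat A) (hB : SmoothMat B)
    (i : Fin n) (x : Fin n → ℝ) :
    fderiv ℝ (fun y => frobInner (A y) (B y)) x (Pi.single i 1) =
      frobInner (covDer Γ i A x) (B x) + frobInner (A x) (covDer Γ i B x) := by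
  rw [YM.fderiv_frobInner hA hB, covDer, covDer, frobInner_add_left, frobInner_add_right]
  linear_combination -frobInner_comm_add_frobInner_comm_eq_zero (hmc x i) (A x) (B x)

end Frobenius

section StressEnergy

variable {Γ : Conn n m} {x₀ : Fin n → ℝ} {t₀ : ℝ}

theorem normSqF_eq_sum_frobInner (Γ : Conn n m) (x : Fin n → ℝ) :
    normSqF Γ x = ∑ i, ∑ j, frobInner (curv Γ i j x) (curv Γ i j x) := by
  simp only [normSqF, frobInner_self]

theorem normSqF_nonneg (Γ : Conn n m) (x : Fin n → ℝ) : 0 ≤ normSqF Γ x :=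
  Finset.sum_nonneg fun _ _ => Finset.sum_nonneg fun _ _ => frobSq_nonneg _

theorem normSqF_eq_zero {x : Fin n → ℝ} : normSqF Γ x = 0 ↔ ∀ i j, curv Γ i j x = 0 := by
  simp [normSqF, Finset.sum_eq_zero_iff_of_nonneg, Finset.sum_nonneg, frobSq_nonneg, frobSq_eq_zero]

theorem sum_frobSq_curv_le (Γ : Conn n m) (i : Fin n) (x : Fin n → ℝ) :
    ∑ k, frobSq (curv Γ i k x) ≤ normSqF Γ x :=
  Finset.single_le_sum (f := fun i => ∑ k, frobSq (curv Γ i k x))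
    (fun _ _ => Finset.sum_nonneg fun _ _ => frobSq_nonneg _) (Finset.mem_univ i)

theorem contDiff_normSqF (hsm : Smooth Γ) : ContDiff ℝ (⊤ : ℕ∞) (normSqF Γ) := by
  simp only [funext (normSqF_eq_sum_frobInner Γ)]
  exact ContDiff.sum fun i _ => ContDiff.sum fun j _ =>
    contDiff_frobInner (hsm.smoothMat_curv i j) (hsm.smoothMat_curv i j)

theorem fderiv_normSqF (hsm : Smooth Γ) (hmc : MetricCompat Γ) (i : Fin n) (x : Fin n → ℝ) :
    fderiv ℝ (normSqF Γ) x (Pi.single i 1) =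
      2 * ∑ j, ∑ k, frobInner (curv Γ j k x) (covDer Γ i (curv Γ j k) x) := by
  have hdiff (j k : Fin n) :
      DifferentiableAt ℝ (fun y => frobInner (curv Γ j k y) (curv Γ j k y)) x :=
    (contDiff_frobInner (hsm.smoothMat_curv j k) (hsm.smoothMat_curv j k)).differentiable
      (by simp) x
  rw [funext (normSqF_eq_sum_frobInner Γ), Finset.mul_sum,
    fderiv_fun_sum fun j _ => DifferentiableAt.fun_sum fun k _ => hdiff j k, _root_.sum_apply]
  refine Finset.sum_congr rfl fun j _ => ?_
  rw [fderiv_fun_sum fun k _ => hdiff j k, _root_.sum_apply, Finset.mul_sum]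
  refine Finset.sum_congr rfl fun k _ => ?_
  rw [hmc.fderiv_frobInner (hsm.smoothMat_curv j k) (hsm.smoothMat_curv j k), two_mul,
    frobInner_comm (covDer Γ i _ x)]

/-- The stress-energy tensor `S_{ij} = ∑ₖ ⟨F_{ik}, F_{jk}⟩ - δ_{ij} |F|² / 4`, whose divergence
involves the curvature only through `D*F`. -/
def stressEnergy (Γ : Conn n m) (i j : Fin n) (x : Fin n → ℝ) : ℝ :=
  ∑ k, frobInner (curv Γ i k x) (curv Γ j k x) - if i = j then normSqF Γ x / 4 else 0

theorem contDiff_stressEnergy (hsm : Smooth Γ) (i j : Fin n) :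
    ContDiff ℝ (⊤ : ℕ∞) (stressEnergy Γ i j) := by
  refine .sub (.sum fun k _ =>
    contDiff_frobInner (hsm.smoothMat_curv i k) (hsm.smoothMat_curv j k)) ?_
  split_ifs
  · exact (contDiff_normSqF hsm).div_const 4
  · exact contDiff_const

theorem sum_stressEnergy_self (Γ : Conn n m) (x : Fin n → ℝ) :
    ∑ i, stressEnergy Γ i i x = (4 - n) / 4 * normSqF Γ x := by
  simp only [stressEnergy, Finset.sum_sub_distrib, ← normSqF_eq_sum_frobInner, if_true,
    Finset.sum_const, Finset.card_univ, Fintype.card_fin, nsmul_eq_mul]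
  ring

theorem abs_stressEnergy_le (Γ : Conn n m) (i j : Fin n) (x : Fin n → ℝ) :
    |stressEnergy Γ i j x| ≤ 5 / 4 * normSqF Γ x := by
  have hquad : |∑ k, frobInner (curv Γ i k x) (curv Γ j k x)| ≤ normSqF Γ x := by
    calc |∑ k, frobInner (curv Γ i k x) (curv Γ j k x)|
        ≤ ∑ k, (frobSq (curv Γ i k x) + frobSq (curv Γ j k x)) / 2 :=
          (Finset.abs_sum_le_sum_abs _ _).trans
            (Finset.sum_le_sum fun k _ => abs_frobInner_le _ _)
      _ = (∑ k, frobSq (curv Γ i k x) + ∑ k, frobSq (curv Γ j k x)) / 2 := by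
          rw [← Finset.sum_add_distrib, Finset.sum_div]
      _ ≤ normSqF Γ x := by linarith [sum_frobSq_curv_le Γ i x, sum_frobSq_curv_le Γ j x]
  have htrace : |if i = j then normSqF Γ x / 4 else 0| ≤ normSqF Γ x / 4 := by
    have := normSqF_nonneg Γ x
    split_ifs
    · rw [abs_of_nonneg (by positivity)]
    · rw [abs_zero]; positivity
  exact (abs_sub _ _).trans (by linarith)

theorem sum_frobInner_curv_covDer_curv (hsm : Smooth Γ) (j : Fin n) (x : Fin n → ℝ) :
    ∑ i, ∑ k, frobInner (curv Γ i k x) (covDer Γ i (curv Γ j k) x) =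
      (∑ i, ∑ k, frobInner (curv Γ i k x) (covDer Γ j (curv Γ i k) x)) / 2 := by
  have hswap : ∑ i, ∑ k, frobInner (curv Γ i k x) (covDer Γ i (curv Γ j k) x) =
      ∑ i, ∑ k, frobInner (curv Γ i k x) (covDer Γ k (curv Γ i j) x) := by
    rw [Finset.sum_comm]
    refine Finset.sum_congr rfl fun i _ => Finset.sum_congr rfl fun k _ => ?_
    rw [curv_antisymm Γ k i, covDer_curv_antisymm, frobInner_neg_neg]
  have hbianchi (i k : Fin n) : covDer Γ i (curv Γ j k) x + covDer Γ k (curv Γ i j) x =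
      covDer Γ j (curv Γ i k) x := by
    rw [covDer_curv_antisymm Γ j i k, ← add_eq_zero_iff_eq_neg, ← bianchi_identity hsm i j k x]
    abel
  rw [eq_div_iff two_ne_zero, mul_two]
  nth_rw 2 [hswap]
  simp only [← Finset.sum_add_distrib, ← frobInner_add_right, hbianchi]

theorem fderiv_stressEnergy (hsm : Smooth Γ) (hmc : MetricCompat Γ) (i j l : Fin n)
    (x : Fin n → ℝ) :
    fderiv ℝ (stressEnergy Γ i j) x (Pi.single l 1) =
      ∑ k, frobInner (covDer Γ l (curv Γ i k) x) (curv Γ j k x) +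
        ∑ k, frobInner (curv Γ i k x) (covDer Γ l (curv Γ j k) x) -
          if i = j then fderiv ℝ (normSqF Γ) x (Pi.single l 1) / 4 else 0 := by
  have hquad (k : Fin n) :
      DifferentiableAt ℝ (fun y => frobInner (curv Γ i k y) (curv Γ j k y)) x :=
    (contDiff_frobInner (hsm.smoothMat_curv i k) (hsm.smoothMat_curv j k)).differentiable
      (by simp) x
  have hN : DifferentiableAt ℝ (normSqF Γ) x := (contDiff_normSqF hsm).differentiable (by simp) x
  have htrace : HasFDerivAt (fun y => if i = j then normSqF Γ y / 4 else 0)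
      (if i = j then (4 : ℝ)⁻¹ • fderiv ℝ (normSqF Γ) x else 0) x := by
    split_ifs
    · exact hN.hasFDerivAt.mul_const _
    · exact hasFDerivAt_const _ _
  change fderiv ℝ (fun y => _ - _) x _ = _
  rw [fderiv_fun_sub (DifferentiableAt.fun_sum fun k _ => hquad k) htrace.differentiableAt,
    _root_.sub_apply, htrace.fderiv, fderiv_fun_sum fun k _ => hquad k, _root_.sum_apply,
    ← Finset.sum_add_distrib]
  congr 1
  · exact Finset.sum_congr rfl fun k _ =>
      hmc.fderiv_frobInner (hsm.smoothMat_curv i k) (hsm.smoothMat_curv j k) l x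
  · split_ifs <;> simp [div_eq_inv_mul]

theorem sum_fderiv_stressEnergy (hsm : Smooth Γ) (hmc : MetricCompat Γ) (j : Fin n)
    (x : Fin n → ℝ) :
    ∑ i, fderiv ℝ (stressEnergy Γ i j) x (Pi.single i 1) =
      -∑ k, frobInner (dstarF Γ k x) (curv Γ j k x) := by
  have hdstar : ∑ k, frobInner (dstarF Γ k x) (curv Γ j k x) =
      -∑ i, ∑ k, frobInner (covDer Γ i (curv Γ i k) x) (curv Γ j k x) := by
    rw [Finset.sum_comm]
    simp only [dstarF, frobInner_neg_left, frobInner_sum_left, Finset.sum_neg_distrib]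
  simp only [fderiv_stressEnergy hsm hmc, Finset.sum_sub_distrib, Finset.sum_add_distrib,
    Finset.sum_ite_eq', Finset.mem_univ, if_true, sum_frobInner_curv_covDer_curv hsm,
    fderiv_normSqF hsm hmc, hdstar]
  ring

theorem IsSolitonAt.sum_fderiv_stressEnergy (hsol : IsSolitonAt Γ x₀ t₀) (hsm : Smooth Γ)
    (hmc : MetricCompat Γ) (j : Fin n) (x : Fin n → ℝ) :
    ∑ i, fderiv ℝ (stressEnergy Γ i j) x (Pi.single i 1) =
      1 / (2 * t₀) * (∑ i, (x i - x₀ i) * stressEnergy Γ i j x +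
        (x j - x₀ j) * (normSqF Γ x / 4)) := by
  have hdstar (k : Fin n) :
      dstarF Γ k x = -((1 / (2 * t₀)) • ∑ i, (x i - x₀ i) • curv Γ i k x) := by
    rw [← hsol x k, dstarF]
  simp only [YM.sum_fderiv_stressEnergy hsm hmc, hdstar, frobInner_neg_left, frobInner_smul_left,
    frobInner_sum_left, Finset.sum_neg_distrib, neg_neg, ← Finset.mul_sum]
  rw [Finset.sum_comm]
  simp [stressEnergy, mul_sub, Finset.sum_sub_distrib, Finset.mul_sum]

end StressEnergy

section GaussWeight

/-- The Gaussian `exp (-|x - x₀|² / (4 t₀))` weighting `|F|²` in `Ffunc`. -/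
def gaussWeight (x₀ : Fin n → ℝ) (t₀ : ℝ) (x : Fin n → ℝ) : ℝ :=
  Real.exp (-(∑ i, (x i - x₀ i) ^ 2) / (4 * t₀))

theorem gaussWeight_pos (x₀ : Fin n → ℝ) (t₀ : ℝ) (x : Fin n → ℝ) : 0 < gaussWeight x₀ t₀ x :=
  Real.exp_pos _

theorem contDiff_gaussWeight (x₀ : Fin n → ℝ) (t₀ : ℝ) :
    ContDiff ℝ (⊤ : ℕ∞) (gaussWeight x₀ t₀) := by
  unfold gaussWeight
  fun_prop

theorem fderiv_gaussWeight (x₀ : Fin n → ℝ) (t₀ : ℝ) (x v : Fin n → ℝ) :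
    fderiv ℝ (gaussWeight x₀ t₀) x v =
      -(1 / (2 * t₀)) * (∑ i, (x i - x₀ i) * v i) * gaussWeight x₀ t₀ x := by
  have hsq (i : Fin n) : HasFDerivAt (fun y : Fin n → ℝ => (y i - x₀ i) ^ 2)
      ((2 * (x i - x₀ i)) • ContinuousLinearMap.proj (R := ℝ) (φ := fun _ => ℝ) i) x := by
    simpa using ((hasFDerivAt_apply (𝕜 := ℝ) i x).sub_const (x₀ i)).pow 2
  have hderiv : HasFDerivAt (gaussWeight x₀ t₀) (gaussWeight x₀ t₀ x • _) x :=
    ((HasFDerivAt.fun_sum (u := Finset.univ) fun i _ => hsq i).fun_neg.mul_const (4 * t₀)⁻¹).exp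
  rw [hderiv.fderiv]
  simp only [_root_.smul_apply, _root_.neg_apply, _root_.sum_apply, ContinuousLinearMap.proj_apply,
    smul_eq_mul, mul_assoc, ← Finset.mul_sum]
  ring

theorem integrable_gaussWeight (x₀ : Fin n → ℝ) {t₀ : ℝ} (ht : 0 < t₀) :
    Integrable (gaussWeight x₀ t₀) := by
  have hb : 0 < (4 * t₀)⁻¹ := by positivity
  have hprod := Integrable.fintype_prod (μ := fun _ => volume)
    fun i => (integrable_exp_neg_mul_sq hb).comp_sub_right (x₀ i)
  refine hprod.congr (.of_forall fun x => ?_)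
  simp only [gaussWeight, ← Real.exp_sum, ← Finset.mul_sum]
  ring_nf

theorem exp_enorm_mul_gaussWeight_le (x₀ : Fin n → ℝ) {t₀ : ℝ} (ht : 0 < t₀) (x : Fin n → ℝ) :
    Real.exp (enorm x) * gaussWeight x₀ t₀ x ≤
      Real.exp (4 * t₀ + (∑ i, x₀ i ^ 2) / (8 * t₀)) * gaussWeight x₀ (2 * t₀) x := by
  have hsq : ∑ i, x i ^ 2 ≤ 2 * ∑ i, (x i - x₀ i) ^ 2 + 2 * ∑ i, x₀ i ^ 2 := by
    rw [Finset.mul_sum, Finset.mul_sum, ← Finset.sum_add_distrib]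
    exact Finset.sum_le_sum fun i _ => by nlinarith [sq_nonneg (x i - 2 * x₀ i)]
  have henorm : enorm x ^ 2 = ∑ i, x i ^ 2 := Real.sq_sqrt (by positivity)
  have hamgm : enorm x ≤ enorm x ^ 2 / (16 * t₀) + 4 * t₀ := by
    calc enorm x
        = enorm x ^ 2 / (16 * t₀) + 4 * t₀ - (enorm x - 8 * t₀) ^ 2 / (16 * t₀) := by
          field_simp; ring
      _ ≤ enorm x ^ 2 / (16 * t₀) + 4 * t₀ := sub_le_self _ (by positivity)
  have hdiv : enorm x ^ 2 / (16 * t₀) ≤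
      (∑ i, (x i - x₀ i) ^ 2) / (8 * t₀) + (∑ i, x₀ i ^ 2) / (8 * t₀) := by
    rw [henorm, ← add_div, div_le_div_iff₀ (by positivity) (by positivity)]
    nlinarith
  rw [gaussWeight, gaussWeight, ← Real.exp_add, ← Real.exp_add, Real.exp_le_exp]
  have hsplit : -(∑ i, (x i - x₀ i) ^ 2) / (4 * t₀) =
      -(∑ i, (x i - x₀ i) ^ 2) / (4 * (2 * t₀)) - (∑ i, (x i - x₀ i) ^ 2) / (8 * t₀) := by
    field_simp
    ring
  linarith

end GaussWeight

section RadialStress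

variable {Γ : Conn n m} {x₀ : Fin n → ℝ} {t₀ : ℝ}

/-- The contraction `Y = S(x - x₀, ·)` of the stress-energy tensor with the radial vector field
centred at `x₀`. Its Gaussian-weighted divergence detects `|F|²` on a soliton. -/
def radialStress (Γ : Conn n m) (x₀ x : Fin n → ℝ) (i : Fin n) : ℝ :=
  ∑ j, (x j - x₀ j) * stressEnergy Γ i j x

theorem contDiff_radialStress (hsm : Smooth Γ) (x₀ : Fin n → ℝ) :
    ContDiff ℝ (⊤ : ℕ∞) (radialStress Γ x₀) :=
  contDiff_pi.2 fun i => ContDiff.sum fun j _ =>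
    ((contDiff_apply ℝ ℝ j).sub contDiff_const).mul (contDiff_stressEnergy hsm i j)

theorem norm_radialStress_le (Γ : Conn n m) (x₀ x : Fin n → ℝ) :
    ‖radialStress Γ x₀ x‖ ≤ ‖x - x₀‖ * (n * (5 / 4 * normSqF Γ x)) := by
  have hN := normSqF_nonneg Γ x
  refine (pi_norm_le_iff_of_nonneg (by positivity)).2 fun i => ?_
  calc ‖∑ j, (x j - x₀ j) * stressEnergy Γ i j x‖
      ≤ ∑ _j : Fin n, ‖x - x₀‖ * (5 / 4 * normSqF Γ x) :=
        norm_sum_le_of_le _ fun j _ => (norm_mul_le _ _).trans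
          (mul_le_mul (norm_le_pi_norm (x - x₀) j) (abs_stressEnergy_le Γ i j x)
            (norm_nonneg _) (norm_nonneg _))
    _ = ‖x - x₀‖ * (n * (5 / 4 * normSqF Γ x)) := by
        simp only [Finset.sum_const, Finset.card_univ, Fintype.card_fin, nsmul_eq_mul]
        ring

theorem divergence_radialStress (hsm : Smooth Γ) (x₀ x : Fin n → ℝ) :
    divergence (radialStress Γ x₀) x = ∑ i, stressEnergy Γ i i x +
      ∑ j, (x j - x₀ j) * ∑ i, fderiv ℝ (stressEnergy Γ i j) x (Pi.single i 1) := by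
  have hS (i j : Fin n) : DifferentiableAt ℝ (stressEnergy Γ i j) x :=
    (contDiff_stressEnergy hsm i j).differentiable (by simp) x
  have hcoord (j : Fin n) : DifferentiableAt ℝ (fun y : Fin n → ℝ => y j - x₀ j) x := by fun_prop
  have hterm (i : Fin n) : fderiv ℝ (fun y => radialStress Γ x₀ y i) x (Pi.single i 1) =
      stressEnergy Γ i i x +
        ∑ j, (x j - x₀ j) * fderiv ℝ (stressEnergy Γ i j) x (Pi.single i 1) := by
    simp only [radialStress]
    rw [fderiv_fun_sum fun j _ => (hcoord j).fun_mul (hS i j), _root_.sum_apply]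
    simp [fderiv_fun_mul (hcoord _) (hS i _), fderiv_sub_const, fderiv_apply,
      Finset.sum_add_distrib, Pi.single_apply, add_comm]
  simp only [divergence, hterm, Finset.sum_add_distrib, Finset.mul_sum]
  rw [Finset.sum_comm]

theorem IsSolitonAt.divergence_gaussWeight_smul_radialStress (hsol : IsSolitonAt Γ x₀ t₀)
    (hsm : Smooth Γ) (hmc : MetricCompat Γ) (x : Fin n → ℝ) :
    divergence (fun y => gaussWeight x₀ t₀ y • radialStress Γ x₀ y) x =
      ((4 - n) / 4 + (∑ i, (x i - x₀ i) ^ 2) / (8 * t₀)) * normSqF Γ x * gaussWeight x₀ t₀ x := by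
  rw [divergence_smul ((contDiff_gaussWeight x₀ t₀).differentiable (by simp) x)
      fun i => (contDiff_pi.1 (contDiff_radialStress hsm x₀) i).differentiable (by simp) x,
    divergence_radialStress hsm, sum_stressEnergy_self, fderiv_gaussWeight]
  have hradial : ∑ j, (x j - x₀ j) * ∑ i, (x i - x₀ i) * stressEnergy Γ i j x =
      ∑ i, (x i - x₀ i) * radialStress Γ x₀ x i := by
    simp only [radialStress, Finset.mul_sum]
    rw [Finset.sum_comm]
    exact Finset.sum_congr rfl fun i _ => Finset.sum_congr rfl fun j _ => mul_left_comm _ _ _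
  have hsoliton :
      ∑ j, (x j - x₀ j) * ∑ i, fderiv ℝ (stressEnergy Γ i j) x (Pi.single i 1) =
        1 / (2 * t₀) * (∑ i, (x i - x₀ i) * radialStress Γ x₀ x i +
          (∑ i, (x i - x₀ i) ^ 2) * (normSqF Γ x / 4)) := by
    simp only [hsol.sum_fderiv_stressEnergy hsm hmc, ← hradial, Finset.sum_mul,
      ← Finset.sum_add_distrib]
    rw [Finset.mul_sum]
    exact Finset.sum_congr rfl fun j _ => by ring
  rw [hsoliton]
  ring

end RadialStress

section CurvatureGrowth

theorem exists_eval_le_mul_exp (p : Polynomial ℝ) :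
    ∃ C, ∀ r : ℝ, 0 ≤ r → p.eval r ≤ C * Real.exp r := by
  induction p using Polynomial.induction_on' with
  | add p q hp hq =>
    obtain ⟨C, hC⟩ := hp
    obtain ⟨D, hD⟩ := hq
    refine ⟨C + D, fun r hr => ?_⟩
    rw [Polynomial.eval_add, add_mul]
    exact add_le_add (hC r hr) (hD r hr)
  | monomial k a =>
    refine ⟨|a| * k.factorial, fun r hr => ?_⟩
    have hexp := Real.pow_div_factorial_le_exp r hr k
    rw [div_le_iff₀' (by positivity)] at hexp
    rw [Polynomial.eval_monomial, mul_assoc]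
    gcongr
    exact le_abs_self a

variable {Γ : Conn n m} {t₀ : ℝ}

theorem PolyCurvGrowth2.polyCurvGrowth (h : PolyCurvGrowth2 Γ) : PolyCurvGrowth Γ := by
  obtain ⟨p, hp⟩ := h
  refine ⟨p, fun x => le_trans ?_ (hp x)⟩
  rw [add_assoc]
  refine le_add_of_nonneg_right ?_
  unfold frobNorm
  positivity

theorem PolyCurvGrowth.exists_normSqF_le (h : PolyCurvGrowth Γ) :
    ∃ C, ∀ x, normSqF Γ x ≤ C * Real.exp (enorm x) := by
  obtain ⟨p, hp⟩ := h
  obtain ⟨C, hC⟩ := exists_eval_le_mul_exp (p ^ 2)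
  refine ⟨C, fun x => ?_⟩
  calc normSqF Γ x = normF Γ x ^ 2 := (Real.sq_sqrt (normSqF_nonneg Γ x)).symm
    _ ≤ p.eval (enorm x) ^ 2 := by gcongr; exacts [Real.sqrt_nonneg _, hp x]
    _ = (p ^ 2).eval (enorm x) := (Polynomial.eval_pow 2).symm
    _ ≤ C * Real.exp (enorm x) := hC _ (Real.sqrt_nonneg _)

theorem PolyCurvGrowth.integrable_normSqF_mul_gaussWeight (h : PolyCurvGrowth Γ) (hsm : Smooth Γ)
    (x₀ : Fin n → ℝ) (ht : 0 < t₀) : Integrable fun x => normSqF Γ x * gaussWeight x₀ t₀ x := by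
  obtain ⟨C, hC⟩ := h.exists_normSqF_le
  have hC₀ : 0 ≤ C := nonneg_of_mul_nonneg_left ((normSqF_nonneg Γ 0).trans (hC 0)) (Real.exp_pos _)
  refine ((integrable_gaussWeight x₀ (t₀ := 2 * t₀) (by positivity)).const_mul
    (C * Real.exp (4 * t₀ + (∑ i, x₀ i ^ 2) / (8 * t₀)))).mono'
      ((contDiff_normSqF hsm).continuous.mul
        (contDiff_gaussWeight x₀ t₀).continuous).aestronglyMeasurable (ae_of_all _ fun x => ?_)
  have hG := (gaussWeight_pos x₀ t₀ x).le
  calc ‖normSqF Γ x * gaussWeight x₀ t₀ x‖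
      = normSqF Γ x * gaussWeight x₀ t₀ x :=
        Real.norm_of_nonneg (mul_nonneg (normSqF_nonneg Γ x) hG)
    _ ≤ C * Real.exp (enorm x) * gaussWeight x₀ t₀ x := by gcongr; exact hC x
    _ ≤ _ := by
      rw [mul_assoc, mul_assoc]
      exact mul_le_mul_of_nonneg_left (exp_enorm_mul_gaussWeight_le x₀ ht x) hC₀

end CurvatureGrowth

section Rigidity

variable {Γ : Conn n m} {x₀ : Fin n → ℝ} {t₀ : ℝ}

theorem IsSolitonAt.divergence_gaussWeight_smul_radialStress_eq_zero (hsol : IsSolitonAt Γ x₀ t₀)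
    (hn : n ≤ 4) (ht : 0 < t₀) (hsm : Smooth Γ) (hmc : MetricCompat Γ)
    (hint : Integrable fun x => normSqF Γ x * gaussWeight x₀ t₀ x) :
    divergence (fun x => gaussWeight x₀ t₀ x • radialStress Γ x₀ x) = 0 := by
  refine divergence_eq_zero_of_nonneg (c := x₀)
    (((contDiff_gaussWeight x₀ t₀).smul (contDiff_radialStress hsm x₀)).of_le (by simp))
    (fun x => ?_) (hint.const_mul (n * (5 / 4))) fun x => ?_
  · rw [Pi.zero_apply, hsol.divergence_gaussWeight_smul_radialStress hsm hmc]
    have hn' : (0 : ℝ) ≤ 4 - n := sub_nonneg.2 (by exact_mod_cast hn)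
    have hN := normSqF_nonneg Γ x
    have hG := gaussWeight_pos x₀ t₀ x
    positivity
  · have hG := gaussWeight_pos x₀ t₀ x
    rw [norm_smul, Real.norm_of_nonneg hG.le]
    calc gaussWeight x₀ t₀ x * ‖radialStress Γ x₀ x‖
        ≤ gaussWeight x₀ t₀ x * (‖x - x₀‖ * (n * (5 / 4 * normSqF Γ x))) := by
          gcongr; exact norm_radialStress_le Γ x₀ x
      _ = _ := by ring

theorem IsSolitonAt.normSqF_eq_zero (hsol : IsSolitonAt Γ x₀ t₀) (hn : n ≤ 4) (ht : 0 < t₀)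
    (hsm : Smooth Γ) (hmc : MetricCompat Γ)
    (hint : Integrable fun x => normSqF Γ x * gaussWeight x₀ t₀ x) : normSqF Γ = 0 := by
  have hdiv := hsol.divergence_gaussWeight_smul_radialStress_eq_zero hn ht hsm hmc hint
  have hoff : ∀ x ≠ x₀, normSqF Γ x = 0 := by
    intro x hx
    obtain ⟨k, hk⟩ := Function.ne_iff.1 hx
    have hr : 0 < ∑ i, (x i - x₀ i) ^ 2 :=
      Finset.sum_pos' (fun _ _ => sq_nonneg _)
        ⟨k, Finset.mem_univ k, sq_pos_of_ne_zero (sub_ne_zero.2 hk)⟩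
    have hn' : (0 : ℝ) ≤ 4 - n := sub_nonneg.2 (by exact_mod_cast hn)
    have hfactor : 0 < (4 - n : ℝ) / 4 + (∑ i, (x i - x₀ i) ^ 2) / (8 * t₀) := by positivity
    have hx_div := congrFun hdiv x
    rw [hsol.divergence_gaussWeight_smul_radialStress hsm hmc] at hx_div
    simpa [hfactor.ne', (gaussWeight_pos x₀ t₀ x).ne'] using hx_div
  obtain _ | _ := isEmpty_or_nonempty (Fin n)
  · funext x
    simp [normSqF]
  · exact Continuous.ext_on (dense_compl_singleton x₀) (contDiff_normSqF hsm).continuous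
      continuous_zero hoff

end Rigidity

end YM

theorem soliton_flat_low_dim_general (n m : ℕ) (hn : n ≤ 4) (Γ : YM.Conn n m)
    (hsm : YM.Smooth Γ) (hmc : YM.MetricCompat Γ) (x₀ : Fin n → ℝ) (t₀ : ℝ) (ht : 0 < t₀)
    (hsol : YM.IsSolitonAt Γ x₀ t₀)
    (hint : Integrable fun x => YM.normSqF Γ x * YM.gaussWeight x₀ t₀ x) :
    ∀ (i j : Fin n) (x : Fin n → ℝ), YM.curv Γ i j x = 0 := fun i j x =>
  YM.normSqF_eq_zero.1 (congrFun (hsol.normSqF_eq_zero hn ht hsm hmc hint) x) i j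

/-- **Low-dimensional rigidity** (Proposition 1.3, second part): any
metric-compatible `(0,1)`-soliton on `ℝⁿ × ℝᵐ`, `n ≤ 4`, with polynomial
curvature growth to order two, is flat. -/
theorem soliton_flat_low_dim (n m : ℕ) (hn : n ≤ 4) (hm : 1 ≤ m)
    (Γ : YM.Conn n m) (hsm : YM.Smooth Γ) (hmc : YM.MetricCompat Γ)
    (hsol : YM.IsSoliton Γ) (hpoly : YM.PolyCurvGrowth2 Γ) :
    ∀ (i j : Fin n) (x : Fin n → ℝ), YM.curv Γ i j x = 0 :=
  soliton_flat_low_dim_general n m hn Γ hsm hmc 0 1 one_pos hsol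
    (hpoly.polyCurvGrowth.integrable_normSqF_mul_gaussWeight hsm 0 one_pos)
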